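/- Let 1 ≤ s ≤ ∞ and let s' be the conjugate exponent of s. There exists a constant C > 0 such that for all Schwartz functions f, g on ℝ^d the cross-Wigner distribution satisfies ‖W(g,f)‖_{M^{1,∞}(ℝ^{2d})} ≤ C · ‖f‖_{W(L²,L^s)} · ‖g‖_{W(L²,L^{s'})}. -/

import Mathlib

open MeasureTheory SchwartzMap Complex ENNReal NNReal

noncomputable section

/-- Mixed `L^p`-type norm of an `ℝ≥0∞`-valued function, with the usual
`essSup` modification when `p = ∞`. -/
def lqNorm {α : Type*} [MeasurableSpace α] (μ : Measure α) (p : ℝ≥0∞)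
    (f : α → ℝ≥0∞) : ℝ≥0∞ :=
  if p = ∞ then essSup f μ else (∫⁻ a, f a ^ p.toReal ∂μ) ^ (1 / p.toReal)

/-- Conjugate exponent in `ℝ≥0∞` : `1/p + 1/p' = 1`, with `1' = ∞`, `∞' = 1`. -/
def dualExp (p : ℝ≥0∞) : ℝ≥0∞ :=
  if p = 1 then ∞ else if p = ∞ then 1 else ENNReal.ofReal (p.toReal / (p.toReal - 1))

/-- `1/p` as a real number, with the convention `1/∞ = 0`. -/
def invR (p : ℝ≥0∞) : ℝ := (p⁻¹).toReal

/-- The Gaussian window `G(t) = exp(-π |t|²)` (as a complex-valued function). -/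
def gaussWin {ι : Type*} [Fintype ι] (t : EuclideanSpace ℝ ι) : ℂ :=
  Complex.exp (-(Real.pi * ‖t‖ ^ 2))

/-- Short-time Fourier transform with Gaussian window:
`V_G F (x, ω) = ∫ F t * conj (G (t - x)) * exp (-2πi ω⬝t) dt`. -/
def STFT {ι : Type*} [Fintype ι] (F : EuclideanSpace ℝ ι → ℂ)
    (x ω : EuclideanSpace ℝ ι) : ℂ :=
  ∫ t, F t * (starRingEnd ℂ) (gaussWin (t - x)) *
    Complex.exp (Complex.I * (-(2 * Real.pi * (inner ℝ ω t : ℝ))))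

/-- Modulation space norm `M^{p,q}`. -/
def modNorm {ι : Type*} [Fintype ι] (p q : ℝ≥0∞)
    (F : EuclideanSpace ℝ ι → ℂ) : ℝ≥0∞ :=
  lqNorm volume q fun ω => lqNorm volume p fun x => (‖STFT F x ω‖₊ : ℝ≥0∞)

/-- Wiener amalgam norm `W(𝓕 L^p, L^q)` (local component Fourier–Lebesgue). -/
def wFLNorm {ι : Type*} [Fintype ι] (p q : ℝ≥0∞)
    (F : EuclideanSpace ℝ ι → ℂ) : ℝ≥0∞ :=
  lqNorm volume q fun x => lqNorm volume p fun ω => (‖STFT F x ω‖₊ : ℝ≥0∞)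

/-- The unit cube `[0,1)^d`. -/
def unitCube (d : ℕ) : Set (EuclideanSpace ℝ (Fin d)) :=
  {x | ∀ i, x i ∈ Set.Ico (0 : ℝ) 1}

/-- Wiener amalgam norm
`‖f‖_{W(L^r,L^s)} = ( Σ_{n ∈ ℤ^d} ( ∫_{[0,1)^d} |f(x+n)|^r dx )^{s/r} )^{1/s}`. -/
def wNorm (d : ℕ) (r s : ℝ≥0∞) (f : EuclideanSpace ℝ (Fin d) → ℂ) : ℝ≥0∞ :=
  lqNorm (Measure.count : Measure (Fin d → ℤ)) s fun n =>
    lqNorm (volume.restrict (unitCube d)) r fun x =>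
      (‖f (x + show EuclideanSpace ℝ (Fin d) from WithLp.toLp 2 fun i => (n i : ℝ))‖₊ : ℝ≥0∞)

/-- Pairing `(x, ω) ∈ ℝ^d × ℝ^d ↦ ℝ^{2d}`. -/
def pairE {d : ℕ} (x ω : EuclideanSpace ℝ (Fin d)) :
    EuclideanSpace ℝ (Fin d ⊕ Fin d) :=
  WithLp.toLp 2 fun i => Sum.elim (fun j => x j) (fun j => ω j) i

/-- First (space) component of a point of `ℝ^{2d}`. -/
def xpart {d : ℕ} (z : EuclideanSpace ℝ (Fin d ⊕ Fin d)) :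
    EuclideanSpace ℝ (Fin d) := WithLp.toLp 2 fun i => z (Sum.inl i)

/-- Second (frequency) component of a point of `ℝ^{2d}`. -/
def wpart {d : ℕ} (z : EuclideanSpace ℝ (Fin d ⊕ Fin d)) :
    EuclideanSpace ℝ (Fin d) := WithLp.toLp 2 fun i => z (Sum.inr i)

/-- Fourier transform `f̂(ω) = ∫ f t e^{-2πi t⬝ω} dt`. -/
def fTrans {ι : Type*} [Fintype ι] (f : EuclideanSpace ℝ ι → ℂ)
    (ω : EuclideanSpace ℝ ι) : ℂ :=
  ∫ t, f t * Complex.exp (Complex.I * (-(2 * Real.pi * (inner ℝ t ω : ℝ))))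

/-- Kohn–Nirenberg operator `a(x,D) f (x) = ∫ a(x,ω) f̂(ω) e^{2πi x⬝ω} dω`. -/
def KNop {d : ℕ} (a : EuclideanSpace ℝ (Fin d ⊕ Fin d) → ℂ)
    (f : EuclideanSpace ℝ (Fin d) → ℂ) (x : EuclideanSpace ℝ (Fin d)) : ℂ :=
  ∫ ω, a (pairE x ω) * fTrans f ω *
    Complex.exp (Complex.I * (2 * Real.pi * (inner ℝ x ω : ℝ)))

/-- Weyl operator `L_σ f (x) = ∫∫ e^{2πi (x-y)⬝ω} σ((x+y)/2, ω) f(y) dy dω`. -/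
def weylOp {d : ℕ} (σ : EuclideanSpace ℝ (Fin d ⊕ Fin d) → ℂ)
    (f : EuclideanSpace ℝ (Fin d) → ℂ) (x : EuclideanSpace ℝ (Fin d)) : ℂ :=
  ∫ y, ∫ ω, Complex.exp (Complex.I * (2 * Real.pi * (inner ℝ (x - y) ω : ℝ))) *
    σ (pairE ((2 : ℝ)⁻¹ • (x + y)) ω) * f y

/-- Cross-Wigner distribution
`W(g,f)(x,ω) = ∫ g(x+t/2) conj(f(x−t/2)) e^{−2πi ω⬝t} dt`. -/
def wigner {d : ℕ} (g f : EuclideanSpace ℝ (Fin d) → ℂ)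
    (z : EuclideanSpace ℝ (Fin d ⊕ Fin d)) : ℂ :=
  ∫ t, g (xpart z + (2 : ℝ)⁻¹ • t) * (starRingEnd ℂ) (f (xpart z - (2 : ℝ)⁻¹ • t)) *
    Complex.exp (Complex.I * (-(2 * Real.pi * (inner ℝ (wpart z) t : ℝ))))

end
section helpers
open scoped FourierTransform

abbrev EE (d : ℕ) := EuclideanSpace ℝ (Fin d)

noncomputable def phi {d : ℕ} (p t : EE d) : ℝ := Real.exp (-(Real.pi / 2) * ‖t - p‖ ^ 2)

lemma phi_temperate {d : ℕ} (p : EE d) : Function.HasTemperateGrowth (phi p) := by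
  have h1 : Function.HasTemperateGrowth (fun t : EE d => -(Real.pi / 2) * ‖t - p‖ ^ 2) := by
    have h2 : Function.HasTemperateGrowth (fun t : EE d => t - p) := by fun_prop
    have h3 := (Function.hasTemperateGrowth_norm_sq (EE d)).comp h2
    exact (Function.HasTemperateGrowth.const (-(Real.pi / 2))).mul h3
  have hu : UniqueDiffOn ℝ (Set.Iio (1:ℝ)) := isOpen_Iio.uniqueDiffOn
  have := Function.HasTemperateGrowth.comp' (g := Real.exp) (t := Set.Iio (1:ℝ)) (by
    rintro - ⟨y, rfl⟩
    simp only [Set.mem_Iio]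
    have : 0 ≤ Real.pi / 2 * ‖y - p‖ ^ 2 := by positivity
    linarith) hu Real.contDiff_exp.contDiffOn (by
      intro N
      refine ⟨0, Real.exp 1, by positivity, ?_⟩
      intro n hn x hx
      rw [norm_iteratedFDerivWithin_eq_norm_iteratedDerivWithin,
        iteratedDerivWithin_eq_iteratedDeriv hu Real.contDiff_exp.contDiffAt hx,
        iteratedDeriv_eq_iterate, Real.iter_deriv_exp]
      simp only [Real.norm_eq_abs, Real.abs_exp, pow_zero, mul_one]
      exact Real.exp_le_exp.mpr (le_of_lt hx)) h1
  exact this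

lemma phi_le_one {d : ℕ} (p t : EE d) : phi p t ≤ 1 := by
  unfold phi
  rw [Real.exp_le_one_iff]
  have : 0 ≤ Real.pi / 2 * ‖t - p‖ ^ 2 := by positivity
  linarith

lemma phi_cont {d : ℕ} (p : EE d) : Continuous (phi p) := by
  unfold phi; fun_prop

noncomputable def gphi {d : ℕ} (g : SchwartzMap (EE d) ℂ) (p : EE d) : SchwartzMap (EE d) ℂ :=
  SchwartzMap.smulLeftCLM ℂ (fun t => ((phi p t : ℝ) : ℂ)) g

lemma gphi_apply {d : ℕ} (g : SchwartzMap (EE d) ℂ) (p t : EE d) :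
    gphi g p t = (phi p t : ℂ) * g t := by
  have h : Function.HasTemperateGrowth (fun t : EE d => ((phi p t : ℝ) : ℂ)) :=
    Function.Complex.hasTemperateGrowth_ofReal.comp (phi_temperate p)
  simp [gphi, SchwartzMap.smulLeftCLM_apply_apply h]

lemma schwartz_planch {d : ℕ} (h : SchwartzMap (EE d) ℂ) :
    ∫⁻ ξ, ‖𝓕 (h : (EE d) → ℂ) ξ‖ₑ ^ 2 = ∫⁻ t, ‖h t‖ₑ ^ 2 := by
  have key : ∀ h : SchwartzMap (EE d) ℂ, ∫⁻ t, ‖h t‖ₑ ^ 2 = ENNReal.ofReal (∫ t, ‖h t‖ ^ 2) := by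
    intro h
    rw [ofReal_integral_eq_lintegral_ofReal]
    · congr 1; ext t
      rw [ENNReal.ofReal_pow (norm_nonneg _), ofReal_norm]
    · exact (h.memLp 2 volume).integrable_norm_pow (by norm_num)
    · exact Filter.Eventually.of_forall fun t => by positivity
  rw [key h, ← SchwartzMap.integral_norm_sq_fourier, ← key]
  rfl

noncomputable def MM {d : ℕ} (g : (EE d) → ℂ) (p : EE d) : ℝ≥0∞ :=
  (∫⁻ t, ENNReal.ofReal (Real.exp (-Real.pi * ‖t - p‖ ^ 2)) * ‖g t‖ₑ ^ 2) ^ (1 / 2 : ℝ)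

lemma gphi_planch {d : ℕ} (g : SchwartzMap (EE d) ℂ) (p : EE d) :
    (∫⁻ ξ, ‖𝓕 (gphi g p : (EE d) → ℂ) ξ‖ₑ ^ (2:ℝ)) ^ (1 / 2 : ℝ) = MM g p := by
  unfold MM
  congr 1
  simp_rw [ENNReal.rpow_two]
  rw [schwartz_planch]
  congr 1; ext t
  rw [gphi_apply, enorm_mul, mul_pow]
  congr 1
  rw [← ofReal_norm, ← ENNReal.ofReal_pow (norm_nonneg _)]
  congr 1
  rw [Complex.norm_real, Real.norm_eq_abs, sq_abs, phi, ← Real.exp_nat_mul]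
  congr 1
  push_cast; ring

noncomputable def pairEquiv (d : ℕ) :
    (EE d) × (EE d) ≃ᵐ EuclideanSpace ℝ (Fin d ⊕ Fin d) :=
  ((MeasurableEquiv.prodCongr (MeasurableEquiv.toLp 2 (Fin d → ℝ)).symm
    (MeasurableEquiv.toLp 2 (Fin d → ℝ)).symm).trans
    (MeasurableEquiv.sumPiEquivProdPi (fun _ : Fin d ⊕ Fin d => ℝ)).symm).trans
    (MeasurableEquiv.toLp 2 (Fin d ⊕ Fin d → ℝ))

lemma pairEquiv_apply {d : ℕ} (z : (EE d) × (EE d)) : pairEquiv d z = pairE z.1 z.2 := by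
  apply (WithLp.equiv 2 _).injective
  funext i
  rcases i with i | i <;> rfl

lemma pairEquiv_mp (d : ℕ) : MeasurePreserving (pairEquiv d) volume volume := by
  refine MeasurePreserving.trans (μb := volume)
    (MeasurePreserving.trans (μb := volume) ?_ ?_) ?_
  · exact (EuclideanSpace.volume_preserving_symm_measurableEquiv_toLp (Fin d)).prod
      (EuclideanSpace.volume_preserving_symm_measurableEquiv_toLp (Fin d))
  · exact (volume_measurePreserving_sumPiEquivProdPi_symm (fun _ : Fin d ⊕ Fin d => ℝ))
  · exact (EuclideanSpace.volume_preserving_symm_measurableEquiv_toLp (Fin d ⊕ Fin d)).symm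

lemma xpart_pairE {d : ℕ} (x ω : EE d) : xpart (pairE x ω) = x := rfl
lemma wpart_pairE {d : ℕ} (x ω : EE d) : wpart (pairE x ω) = ω := rfl

lemma inner_pairE {d : ℕ} (x ω y v : EE d) :
    (inner ℝ (pairE x ω) (pairE y v) : ℝ) = inner ℝ x y + inner ℝ ω v := by
  simp [PiLp.inner_apply, pairE]

lemma pairE_sub {d : ℕ} (x ω y v : EE d) :
    pairE x ω - pairE y v = pairE (x - y) (ω - v) := by
  ext i
  rcases i with i | i <;> simp [pairE]

lemma norm_pairE_sq {d : ℕ} (x ω : EE d) : ‖pairE x ω‖ ^ 2 = ‖x‖ ^ 2 + ‖ω‖ ^ 2 := by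
  rw [← real_inner_self_eq_norm_sq, inner_pairE, real_inner_self_eq_norm_sq,
    real_inner_self_eq_norm_sq]

lemma gauss_ft {d : ℕ} (ω τ : EE d) :
    ∫ v : EE d, cexp (-Real.pi * ‖v - ω‖ ^ 2) *
      cexp (Complex.I * (-(2 * Real.pi * (inner ℝ v τ : ℝ)))) =
    cexp (Complex.I * (-(2 * Real.pi * (inner ℝ ω τ : ℝ)))) * cexp (-Real.pi * ‖τ‖ ^ 2) := by
  rw [← integral_add_right_eq_self _ ω]
  have h := GaussianFourier.integral_cexp_neg_mul_sq_norm_add (V := EE d) (b := (Real.pi : ℂ))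
    (by simpa using Real.pi_pos) (-(2 * Real.pi * Complex.I)) τ
  have h0 : (Real.pi : ℂ) ≠ 0 := by exact_mod_cast Real.pi_ne_zero
  rw [div_self h0, Complex.one_cpow, one_mul] at h
  have h2 : (-(2 * Real.pi * Complex.I)) ^ 2 * (‖τ‖ : ℂ) ^ 2 / (4 * Real.pi) =
      -Real.pi * (‖τ‖ : ℂ) ^ 2 := by
    have : Complex.I ^ 2 = -1 := Complex.I_sq
    field_simp
    linear_combination (4 * (‖τ‖ : ℂ) ^ 2) * this
  rw [h2] at h
  rw [← h, ← integral_const_mul]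
  congr 1; ext v
  rw [← Complex.exp_add, ← Complex.exp_add]
  congr 1
  rw [add_sub_cancel_right, inner_add_left, real_inner_comm v τ]
  push_cast
  ring

noncomputable def kc (d : ℕ) : ℂ :=
  ((Real.pi : ℂ) / ((4 / 3 * Real.pi : ℝ) : ℂ)) ^ (Module.finrank ℝ (EE d) / 2 : ℂ)

noncomputable def kap {d : ℕ} (η : EE d) : ℂ :=
  (kc d)⁻¹ * cexp (-((4 / 3 * Real.pi : ℝ) : ℂ) * ‖η‖ ^ 2)

lemma kc_ne (d : ℕ) : kc d ≠ 0 := by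
  unfold kc
  have h0 : (Real.pi : ℂ) ≠ 0 := by exact_mod_cast Real.pi_ne_zero
  have h1 : ((4 / 3 * Real.pi : ℝ) : ℂ) ≠ 0 := by
    push_cast; exact mul_ne_zero (by norm_num) h0
  rw [Ne, Complex.cpow_eq_zero_iff]
  push Not
  intro h
  exact absurd h (div_ne_zero h0 h1)

lemma kap_int (d : ℕ) : Integrable (kap : (EE d) → ℂ) := by
  unfold kap
  apply Integrable.const_mul
  have := GaussianFourier.integrable_cexp_neg_mul_sq_norm_add (V := EE d)
    (b := ((4 / 3 * Real.pi : ℝ) : ℂ)) (by rw [Complex.ofReal_re]; positivity) 0 0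
  simpa using this

lemma kap_cont (d : ℕ) : Continuous (kap : (EE d) → ℂ) := by
  unfold kap; fun_prop

lemma kap_ft {d : ℕ} (τ : EE d) :
    ∫ η : EE d, kap η * cexp (Complex.I * (-(2 * Real.pi * (inner ℝ η τ : ℝ)))) =
      cexp (-((3 / 4 * Real.pi : ℝ) : ℂ) * ‖τ‖ ^ 2) := by
  have h := GaussianFourier.integral_cexp_neg_mul_sq_norm_add (V := EE d)
    (b := ((4 / 3 * Real.pi : ℝ) : ℂ))
    (by rw [Complex.ofReal_re]; positivity) (-(2 * Real.pi * Complex.I)) τ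
  have h0 : (Real.pi : ℂ) ≠ 0 := by exact_mod_cast Real.pi_ne_zero
  have h2 : (-(2 * Real.pi * Complex.I)) ^ 2 * (‖τ‖ : ℂ) ^ 2 / (4 * ((4 / 3 * Real.pi : ℝ) : ℂ)) =
      -((3 / 4 * Real.pi : ℝ) : ℂ) * (‖τ‖ : ℂ) ^ 2 := by
    have : Complex.I ^ 2 = -1 := Complex.I_sq
    push_cast
    rw [div_eq_iff (by simp [h0])]
    linear_combination (4 * (Real.pi : ℂ)^2 * (‖τ‖ : ℂ) ^ 2) * this
  rw [h2] at h
  change _ = kc d * _ at h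
  rw [← inv_mul_cancel_left₀ (kc_ne d) (cexp _), ← h, ← integral_const_mul]
  congr 1; ext η
  rw [kap, mul_assoc, ← Complex.exp_add]
  congr 3
  rw [real_inner_comm η τ]
  ring

noncomputable def Psi {d : ℕ} (f g : SchwartzMap (EE d) ℂ) (x ω ζ₁ ζ₂ : EE d)
    (z : (EE d) × (EE d)) (η : EE d) : ℂ :=
  kap η * cexp (Complex.I * ((-(2 * Real.pi *
    ((inner ℝ (ω + η) (z.2 + ζ₂) : ℝ) + (inner ℝ ζ₁ z.1 : ℝ))) : ℝ))) *
    (gphi g (x - (2:ℝ)⁻¹ • ζ₂) (z.1 + (2:ℝ)⁻¹ • z.2) *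
      (starRingEnd ℂ) (gphi f (x + (2:ℝ)⁻¹ • ζ₂) (z.1 - (2:ℝ)⁻¹ • z.2)))

lemma phi_phi {d : ℕ} (x ζ u t : EE d) :
    phi (x - (2:ℝ)⁻¹ • ζ) (u + (2:ℝ)⁻¹ • t) * phi (x + (2:ℝ)⁻¹ • ζ) (u - (2:ℝ)⁻¹ • t) =
      Real.exp (-Real.pi * ‖u - x‖ ^ 2) * Real.exp (-(1 / 4 * Real.pi) * ‖t + ζ‖ ^ 2) := by
  unfold phi
  rw [← Real.exp_add, ← Real.exp_add]
  congr 1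
  have e1 : u + (2:ℝ)⁻¹ • t - (x - (2:ℝ)⁻¹ • ζ) = (u - x) + (2:ℝ)⁻¹ • (t + ζ) := by
    rw [smul_add]; abel
  have e2 : u - (2:ℝ)⁻¹ • t - (x + (2:ℝ)⁻¹ • ζ) = (u - x) - (2:ℝ)⁻¹ • (t + ζ) := by
    rw [smul_add]; abel
  rw [e1, e2]
  have p := parallelogram_law_with_norm ℝ (u - x) ((2:ℝ)⁻¹ • (t + ζ))
  have n : ‖(2:ℝ)⁻¹ • (t + ζ)‖ = 2⁻¹ * ‖t + ζ‖ := by rw [norm_smul]; norm_num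
  rw [n] at p
  linear_combination (-(Real.pi / 2)) * p

lemma stepA {d : ℕ} (f g : SchwartzMap (EE d) ℂ) (x ω ζ₁ ζ₂ u t : EE d) :
    ∫ η, Psi f g x ω ζ₁ ζ₂ (u, t) η =
      g (u + (2:ℝ)⁻¹ • t) * (starRingEnd ℂ) (f (u - (2:ℝ)⁻¹ • t)) *
      (cexp (-Real.pi * ‖u - x‖ ^ 2) * cexp (Complex.I * (-(2 * Real.pi * (inner ℝ ζ₁ u : ℝ))))) *
      (cexp (Complex.I * (-(2 * Real.pi * (inner ℝ ω (t + ζ₂) : ℝ)))) *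
        cexp (-Real.pi * ‖t + ζ₂‖ ^ 2)) := by
  have hpp := congrArg (fun r : ℝ => (r : ℂ)) (phi_phi x ζ₂ u t)
  push_cast at hpp
  have h3 : cexp (-Real.pi * ‖t + ζ₂‖ ^ 2) =
    cexp (-(1 / 4 * Real.pi) * ‖t + ζ₂‖ ^ 2) * cexp (-((3 / 4 * Real.pi : ℝ) : ℂ) * ‖t + ζ₂‖ ^ 2)
    := by
    rw [← Complex.exp_add]; congr 1; push_cast; ring
  rw [h3, ← kap_ft]
  have h4 : ∀ η, Psi f g x ω ζ₁ ζ₂ (u, t) η =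
      (g (u + (2:ℝ)⁻¹ • t) * (starRingEnd ℂ) (f (u - (2:ℝ)⁻¹ • t)) *
      (cexp (-Real.pi * ‖u - x‖ ^ 2) * cexp (Complex.I * (-(2 * Real.pi * (inner ℝ ζ₁ u : ℝ))))) *
      (cexp (Complex.I * (-(2 * Real.pi * (inner ℝ ω (t + ζ₂) : ℝ)))) *
        cexp (-(1 / 4 * Real.pi) * ‖t + ζ₂‖ ^ 2))) *
      (kap η * cexp (Complex.I * (-(2 * Real.pi * (inner ℝ η (t + ζ₂) : ℝ))))) := by
    intro η
    have h5 : cexp (Complex.I * ((-(2 * Real.pi *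
        ((inner ℝ (ω + η) (t + ζ₂) : ℝ) + (inner ℝ ζ₁ u : ℝ))) : ℝ))) =
        cexp (Complex.I * (-(2 * Real.pi * (inner ℝ ζ₁ u : ℝ)))) *
        cexp (Complex.I * (-(2 * Real.pi * (inner ℝ ω (t + ζ₂) : ℝ)))) *
        cexp (Complex.I * (-(2 * Real.pi * (inner ℝ η (t + ζ₂) : ℝ)))) := by
      rw [← Complex.exp_add, ← Complex.exp_add]; congr 1
      rw [inner_add_left ω η]
      push_cast; ring
    simp only [Psi]
    rw [h5, gphi_apply, gphi_apply, map_mul, Complex.conj_ofReal]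
    linear_combination (kap η * (cexp (Complex.I * (-(2 * Real.pi * (inner ℝ ζ₁ u : ℝ)))) *
        cexp (Complex.I * (-(2 * Real.pi * (inner ℝ ω (t + ζ₂) : ℝ)))) *
        cexp (Complex.I * (-(2 * Real.pi * (inner ℝ η (t + ζ₂) : ℝ))))) *
        g (u + (2:ℝ)⁻¹ • t) * (starRingEnd ℂ) (f (u - (2:ℝ)⁻¹ • t))) * hpp
  simp_rw [h4]
  rw [integral_const_mul]
  ring

noncomputable def TT {d : ℕ} (z : (EE d) × (EE d)) : (EE d) × (EE d) :=
  (z.1 + (2:ℝ)⁻¹ • z.2, z.1 - (2:ℝ)⁻¹ • z.2)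

lemma TT_cont (d : ℕ) : Continuous (TT : (EE d) × (EE d) → _) := by
  unfold TT; fun_prop

lemma TT_inj (d : ℕ) : Function.Injective (TT : (EE d) × (EE d) → _) := by
  rintro ⟨u, t⟩ ⟨u', t'⟩ h
  simp only [TT, Prod.mk.injEq] at h
  obtain ⟨h1, h2⟩ := h
  have hu : (2:ℝ) • u = (2:ℝ) • u' := by
    rw [two_smul, two_smul]
    have := congrArg₂ (· + ·) h1 h2
    simp only [add_add_sub_cancel] at this
    exact this
  have hu' : u = u' := smul_right_injective _ (two_ne_zero : (2:ℝ) ≠ 0) hu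
  subst hu'
  have ht : (2:ℝ)⁻¹ • t = (2:ℝ)⁻¹ • t' := add_left_cancel h1
  have ht' : t = t' := smul_right_injective _ (inv_ne_zero two_ne_zero : (2:ℝ)⁻¹ ≠ 0) ht
  rw [ht']

lemma TT_emb (d : ℕ) : MeasurableEmbedding (TT : (EE d) × (EE d) → _) :=
  (TT_cont d).measurableEmbedding (TT_inj d)

lemma TT_mp (d : ℕ) : MeasurePreserving (TT : (EE d) × (EE d) → _) volume volume := by
  have s1 : MeasurePreserving (fun z : (EE d) × (EE d) => (z.1, (2:ℝ)⁻¹ • z.1 + z.2))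
      (volume.prod volume) (volume.prod volume) :=
    (MeasurePreserving.id (volume : Measure (EE d))).skew_product
      (g := fun a b => (2:ℝ)⁻¹ • a + b) (by fun_prop)
      (Filter.Eventually.of_forall fun a => map_add_left_eq_self _ _)
  have s2 : MeasurePreserving (fun z : (EE d) × (EE d) => (z.1, z.1 - z.2))
      (volume.prod volume) (volume.prod volume) :=
    (MeasurePreserving.id (volume : Measure (EE d))).skew_product
      (g := fun a b => a - b) (by fun_prop)
      (Filter.Eventually.of_forall fun a => (Measure.measurePreserving_sub_left _ a).map_eq)
  have sw : MeasurePreserving (Prod.swap : (EE d) × (EE d) → _)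
      (volume.prod volume) (volume.prod volume) := Measure.measurePreserving_swap
  have := s2.comp (sw.comp (s1.comp sw))
  have e : (TT : (EE d) × (EE d) → _) = (fun z : (EE d) × (EE d) => (z.1, z.1 - z.2)) ∘
      (Prod.swap ∘ ((fun z : (EE d) × (EE d) => (z.1, (2:ℝ)⁻¹ • z.1 + z.2)) ∘ Prod.swap)) := by
    funext z
    obtain ⟨u, t⟩ := z
    simp only [TT, Function.comp, Prod.swap, Prod.mk.injEq]
    refine ⟨add_comm _ _, ?_⟩
    have : t = (2:ℝ)⁻¹ • t + (2:ℝ)⁻¹ • t := by rw [← add_smul]; norm_num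
    nth_rw 3 [this]
    abel
  rw [e]
  exact this

lemma stepB {d : ℕ} (f g : SchwartzMap (EE d) ℂ) (x ω ζ₁ ζ₂ η : EE d) :
    ∫ z, Psi f g x ω ζ₁ ζ₂ z η =
      kap η * cexp (Complex.I * ((-(2 * Real.pi * (inner ℝ (ω + η) ζ₂ : ℝ)) : ℝ))) *
      (𝓕 (gphi g (x - (2:ℝ)⁻¹ • ζ₂) : (EE d) → ℂ) (ω + η + (2:ℝ)⁻¹ • ζ₁) *
       (starRingEnd ℂ)
        (𝓕 (gphi f (x + (2:ℝ)⁻¹ • ζ₂) : (EE d) → ℂ) (ω + η - (2:ℝ)⁻¹ • ζ₁))) := by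
  rw [Real.fourier_eq', Real.fourier_eq', ← integral_conj, ← integral_prod_mul,
    ← integral_const_mul]
  change _ = ∫ z, _ ∂(volume : Measure ((EE d) × (EE d)))
  refine Eq.trans ?_ ((TT_mp d).integral_comp (TT_emb d) _)
  congr 1; ext ⟨u, t⟩
  simp only [TT, Psi, smul_eq_mul, map_mul, ← Complex.exp_conj, Complex.conj_I, Complex.conj_ofReal]
  have h5 : cexp (Complex.I * ((-(2 * Real.pi *
        ((inner ℝ (ω + η) (t + ζ₂) : ℝ) + (inner ℝ ζ₁ u : ℝ))) : ℝ))) =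
      cexp (Complex.I * ((-(2 * Real.pi * (inner ℝ (ω + η) ζ₂ : ℝ)) : ℝ))) *
      cexp (((-2 * Real.pi * inner ℝ (u + (2:ℝ)⁻¹ • t) (ω + η + (2:ℝ)⁻¹ • ζ₁) : ℝ) : ℂ) * Complex.I) *
      cexp (((-2 * Real.pi * inner ℝ (u - (2:ℝ)⁻¹ • t) (ω + η - (2:ℝ)⁻¹ • ζ₁) : ℝ) : ℂ) *
        -Complex.I) := by
    rw [← Complex.exp_add, ← Complex.exp_add]; congr 1
    simp only [inner_add_left, inner_sub_left, inner_add_right, inner_sub_right, inner_smul_left,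
      inner_smul_right, real_inner_comm t ω, real_inner_comm t η, real_inner_comm u ζ₁]
    simp
    ring
  rw [h5]
  ring

lemma Psi_cont {d : ℕ} (f g : SchwartzMap (EE d) ℂ) (x ω ζ₁ ζ₂ : EE d) :
    Continuous (Function.uncurry (Psi f g x ω ζ₁ ζ₂)) := by
  have h1 := (gphi g (x - (2:ℝ)⁻¹ • ζ₂)).continuous
  have h2 := (gphi f (x + (2:ℝ)⁻¹ • ζ₂)).continuous
  have h3 := kap_cont d
  have h4 : Continuous (starRingEnd ℂ) := Complex.continuous_conj
  unfold Function.uncurry Psi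
  fun_prop

lemma Psi_int {d : ℕ} (f g : SchwartzMap (EE d) ℂ) (x ω ζ₁ ζ₂ : EE d) :
    Integrable (Function.uncurry (Psi f g x ω ζ₁ ζ₂))
      ((volume : Measure ((EE d) × (EE d))).prod volume) := by
  have h1 : Integrable (fun z : (EE d) × (EE d) =>
      gphi g (x - (2:ℝ)⁻¹ • ζ₂) z.1 * gphi f (x + (2:ℝ)⁻¹ • ζ₂) z.2) volume :=
    (gphi g (x - (2:ℝ)⁻¹ • ζ₂)).integrable.mul_prod (gphi f (x + (2:ℝ)⁻¹ • ζ₂)).integrable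
  have h2 := ((TT_mp d).integrable_comp_emb (TT_emb d)).mpr h1
  have h3 := h2.mul_prod (kap_int d)
  refine h3.mono (Psi_cont f g x ω ζ₁ ζ₂).aestronglyMeasurable ?_
  refine Filter.Eventually.of_forall ?_
  rintro ⟨z, η⟩
  have := Complex.norm_exp_I_mul_ofReal (-(2 * Real.pi *
    ((inner ℝ (ω + η) (z.2 + ζ₂) : ℝ) + (inner ℝ ζ₁ z.1 : ℝ))))
  simp only [Function.uncurry, Psi, norm_mul, RCLike.norm_conj, this, TT, Function.comp]
  apply le_of_eq; ring

lemma wig_integrable {d : ℕ} (f g : SchwartzMap (EE d) ℂ) (u : EE d) :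
    Integrable (fun t => g (u + (2:ℝ)⁻¹ • t) * (starRingEnd ℂ) (f (u - (2:ℝ)⁻¹ • t))) := by
  have h1 : Integrable (fun t => g (u + (2:ℝ)⁻¹ • t)) := by
    have := (g.integrable (μ := volume)).comp_add_left u
    exact this.comp_smul (R := (2:ℝ)⁻¹) (by norm_num)
  obtain ⟨C, hC⟩ : ∃ C, ∀ t, ‖f t‖ ≤ C := by
    obtain ⟨C, hC⟩ := f.decay 0 0
    exact ⟨C, fun t => by simpa using hC.2 t⟩
  have hf := f.continuous
  have h4 : Continuous (starRingEnd ℂ) := Complex.continuous_conj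
  refine h1.mul_bdd (c := C) (Continuous.aestronglyMeasurable (by fun_prop)) ?_
  exact Filter.Eventually.of_forall fun t => by simpa using hC _

lemma inner1 {d : ℕ} (f g : SchwartzMap (EE d) ℂ) (x ω ζ₁ ζ₂ u : EE d) :
    ∫ v, wigner g f (pairE u v) * (starRingEnd ℂ) (gaussWin (pairE u v - pairE x ω)) *
      cexp (Complex.I * (-(2 * Real.pi * (inner ℝ (pairE ζ₁ ζ₂) (pairE u v) : ℝ)))) =
    ∫ t, ∫ η, Psi f g x ω ζ₁ ζ₂ (u, t) η := by
  simp_rw [stepA]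
  have hg : Integrable (fun v : EE d => cexp (-Real.pi * ‖v - ω‖ ^ 2)) := by
    have := GaussianFourier.integrable_cexp_neg_mul_sq_norm_add (V := EE d)
      (b := (Real.pi : ℂ)) (by rw [Complex.ofReal_re]; positivity) 0 0
    have := this.comp_sub_right ω
    simpa using this
  set Q : (EE d) → (EE d) → ℂ := fun v t =>
    cexp (-Real.pi * ‖v - ω‖ ^ 2) * (g (u + (2:ℝ)⁻¹ • t) * (starRingEnd ℂ) (f (u - (2:ℝ)⁻¹ • t))) *
      cexp (Complex.I * ((-(2 * Real.pi * (inner ℝ v (t + ζ₂) : ℝ)) : ℝ))) with hQ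
  have hQi : Integrable (Function.uncurry Q) (volume.prod volume) := by
    have h0 := hg.mul_prod (wig_integrable f g u)
    refine h0.mono ?_ ?_
    · have h1 := g.continuous
      have h2 := f.continuous
      have h4 : Continuous (starRingEnd ℂ) := Complex.continuous_conj
      apply Continuous.aestronglyMeasurable
      simp only [hQ, Function.uncurry_def]
      fun_prop
    · refine Filter.Eventually.of_forall ?_
      rintro ⟨v, t⟩
      have := Complex.norm_exp_I_mul_ofReal (-(2 * Real.pi * (inner ℝ v (t + ζ₂) : ℝ)))
      simp only [hQ, Function.uncurry, norm_mul, this, mul_one]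
      exact le_rfl
  set D : ℂ := cexp (-Real.pi * ‖u - x‖ ^ 2) *
    cexp (Complex.I * (-(2 * Real.pi * (inner ℝ ζ₁ u : ℝ)))) with hD
  have hL : ∀ v, wigner g f (pairE u v) * (starRingEnd ℂ) (gaussWin (pairE u v - pairE x ω)) *
      cexp (Complex.I * (-(2 * Real.pi * (inner ℝ (pairE ζ₁ ζ₂) (pairE u v) : ℝ)))) =
      D * ∫ t, Q v t := by
    intro v
    have e1 : (starRingEnd ℂ) (gaussWin (pairE u v - pairE x ω)) =
        cexp (-Real.pi * ‖u - x‖ ^ 2) * cexp (-Real.pi * ‖v - ω‖ ^ 2) := by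
      have := congrArg (fun r : ℝ => (r : ℂ)) (norm_pairE_sq (u - x) (v - ω))
      push_cast at this
      rw [gaussWin, pairE_sub, this, ← Complex.exp_conj, ← Complex.exp_add]
      congr 1
      simp only [map_neg, map_mul, map_add, map_pow, Complex.conj_ofReal]
      ring
    rw [e1, wigner, xpart_pairE, wpart_pairE, inner_pairE, mul_assoc, ← integral_mul_const,
      ← integral_const_mul]
    congr 1; ext t
    simp only [hQ, hD]
    have e2 : cexp (Complex.I * (-(2 * Real.pi * (inner ℝ v t : ℝ)))) *
        cexp (Complex.I * (-(2 * Real.pi * ((inner ℝ ζ₁ u + inner ℝ ζ₂ v : ℝ) : ℂ)))) =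
        cexp (Complex.I * (-(2 * Real.pi * (inner ℝ ζ₁ u : ℝ)))) *
        cexp (Complex.I * ((-(2 * Real.pi * (inner ℝ v (t + ζ₂) : ℝ)) : ℝ))) := by
      rw [← Complex.exp_add, ← Complex.exp_add]; congr 1
      rw [inner_add_right, real_inner_comm v ζ₂]
      push_cast; ring
    linear_combination (cexp (-Real.pi * ‖u - x‖ ^ 2) * cexp (-Real.pi * ‖v - ω‖ ^ 2) *
      (g (u + (2:ℝ)⁻¹ • t) * (starRingEnd ℂ) (f (u - (2:ℝ)⁻¹ • t)))) * e2
  simp_rw [hL]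
  rw [integral_const_mul, integral_integral_swap hQi, ← integral_const_mul]
  congr 1; ext t
  rw [← gauss_ft]
  have : ∀ v, Q v t = (g (u + (2:ℝ)⁻¹ • t) * (starRingEnd ℂ) (f (u - (2:ℝ)⁻¹ • t))) *
      (cexp (-Real.pi * ‖v - ω‖ ^ 2) *
      cexp (Complex.I * (-(2 * Real.pi * (inner ℝ v (t + ζ₂) : ℝ))))) := by
    intro v; simp only [hQ]; push_cast; ring
  simp_rw [this]
  rw [integral_const_mul]
  ring

lemma STFT_bound {d : ℕ} (f g : SchwartzMap (EE d) ℂ) (x ω ζ₁ ζ₂ : EE d) :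
    ‖STFT (wigner g f) (pairE x ω) (pairE ζ₁ ζ₂)‖ₑ ≤
      ∫⁻ η, ‖kap η‖ₑ *
        (‖𝓕 (gphi g (x - (2:ℝ)⁻¹ • ζ₂) : (EE d) → ℂ) (ω + η + (2:ℝ)⁻¹ • ζ₁)‖ₑ *
         ‖𝓕 (gphi f (x + (2:ℝ)⁻¹ • ζ₂) : (EE d) → ℂ) (ω + η - (2:ℝ)⁻¹ • ζ₁)‖ₑ) := by
  set F : EuclideanSpace ℝ (Fin d ⊕ Fin d) → ℂ := fun t => wigner g f t *
    (starRingEnd ℂ) (gaussWin (t - pairE x ω)) *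
    cexp (Complex.I * (-(2 * Real.pi * (inner ℝ (pairE ζ₁ ζ₂) t : ℝ)))) with hF
  have h0 : STFT (wigner g f) (pairE x ω) (pairE ζ₁ ζ₂) = ∫ t, F t := rfl
  by_cases hi : Integrable F
  swap
  · rw [h0, integral_undef hi]; simp
  have h1 : ∫ t, F t = ∫ z : (EE d) × (EE d), F (pairE z.1 z.2) := by
    rw [← (pairEquiv_mp d).integral_comp']
    simp_rw [pairEquiv_apply]
  have h2 : Integrable (fun z : (EE d) × (EE d) => F (pairE z.1 z.2)) := by
    have := ((pairEquiv_mp d).integrable_comp_emb (pairEquiv d).measurableEmbedding).mpr hi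
    simpa only [Function.comp_def, pairEquiv_apply] using this
  have hPi := Psi_int f g x ω ζ₁ ζ₂
  have h3 : ∫ z : (EE d) × (EE d), F (pairE z.1 z.2) =
      ∫ η, ∫ z, Psi f g x ω ζ₁ ζ₂ z η := by
    rw [← integral_integral_swap hPi]
    have h4 : Integrable (fun z : (EE d) × (EE d) => ∫ η, Psi f g x ω ζ₁ ζ₂ z η)
      (volume.prod volume) := hPi.integral_prod_left
    change ∫ z, _ ∂(volume.prod volume) = ∫ z, _ ∂(volume.prod volume)
    rw [integral_prod _ h2, integral_prod _ h4]
    congr 1; ext u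
    exact inner1 f g x ω ζ₁ ζ₂ u
  rw [h0, h1, h3]
  refine (enorm_integral_le_lintegral_enorm _).trans (le_of_eq ?_)
  congr 1; ext η
  rw [stepB]
  have h6 : ‖cexp (Complex.I * ((-(2 * Real.pi * (inner ℝ (ω + η) ζ₂ : ℝ)) : ℝ)))‖ₑ = 1 := by
    rw [← ofReal_norm, Complex.norm_exp_I_mul_ofReal]; simp
  have h7 : ∀ w : ℂ, ‖(starRingEnd ℂ) w‖ₑ = ‖w‖ₑ := by
    intro w; rw [← ofReal_norm, RCLike.norm_conj, ofReal_norm]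
  rw [enorm_mul, enorm_mul, enorm_mul, h6, h7, mul_one]

lemma M_bound {d : ℕ} (f g : SchwartzMap (EE d) ℂ) (ζ : EuclideanSpace ℝ (Fin d ⊕ Fin d)) :
    ∫⁻ z, ‖STFT (wigner g f) z ζ‖ₑ ≤ (∫⁻ η : EE d, ‖kap η‖ₑ) *
      ∫⁻ x : EE d, MM g (x - (2:ℝ)⁻¹ • wpart ζ) * MM f (x + (2:ℝ)⁻¹ • wpart ζ) := by
  obtain ⟨ζ₁, ζ₂, rfl⟩ : ∃ a b : EE d, ζ = pairE a b := by
    refine ⟨xpart ζ, wpart ζ, ?_⟩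
    ext i
    rcases i with i | i <;> rfl
  rw [wpart_pairE]
  have h1 := (pairEquiv_mp d).lintegral_comp_emb (pairEquiv d).measurableEmbedding
    (fun z => ‖STFT (wigner g f) z (pairE ζ₁ ζ₂)‖ₑ)
  rw [← h1]
  refine (lintegral_prod_le _).trans ?_
  have hk : ∫⁻ η : EE d, ‖kap η‖ₑ ≠ ∞ := (kap_int d).2.ne
  rw [← lintegral_const_mul' _ _ hk]
  refine lintegral_mono fun x => ?_
  simp only [pairEquiv_apply]
  refine (lintegral_mono fun ω => STFT_bound f g x ω ζ₁ ζ₂).trans ?_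
  have cg : Continuous (𝓕 (gphi g (x - (2:ℝ)⁻¹ • ζ₂) : (EE d) → ℂ)) :=
    (𝓕 (gphi g (x - (2:ℝ)⁻¹ • ζ₂))).continuous
  have cf : Continuous (𝓕 (gphi f (x + (2:ℝ)⁻¹ • ζ₂) : (EE d) → ℂ)) :=
    (𝓕 (gphi f (x + (2:ℝ)⁻¹ • ζ₂))).continuous
  rw [← gphi_planch, ← gphi_planch]
  generalize 𝓕 (gphi g (x - (2:ℝ)⁻¹ • ζ₂) : (EE d) → ℂ) = A at cg ⊢
  generalize 𝓕 (gphi f (x + (2:ℝ)⁻¹ • ζ₂) : (EE d) → ℂ) = B at cf ⊢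
  have ck := kap_cont d
  have mA : Measurable fun w => ‖A w‖ₑ := cg.enorm.measurable
  have mB : Measurable fun w => ‖B w‖ₑ := cf.enorm.measurable
  have mk : Measurable fun w : EE d => ‖kap w‖ₑ := ck.enorm.measurable
  rw [lintegral_lintegral_swap, ← lintegral_mul_const _ mk]
  rotate_left
  · apply Measurable.aemeasurable
    simp only [Function.uncurry_def]
    exact (mk.comp measurable_snd).mul ((mA.comp (by fun_prop)).mul (mB.comp (by fun_prop)))
  refine lintegral_mono fun η => ?_
  simp only
  rw [lintegral_const_mul _ (by fun_prop)]
  gcongr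
  refine (ENNReal.lintegral_mul_le_Lp_mul_Lq volume Real.HolderConjugate.two_two
    (f := fun ω => ‖A (ω + η + (2:ℝ)⁻¹ • ζ₁)‖ₑ) (g := fun ω => ‖B (ω + η - (2:ℝ)⁻¹ • ζ₁)‖ₑ)
    (by fun_prop) (by fun_prop)).trans (le_of_eq ?_)
  congr 2
  · simp_rw [add_assoc]
    exact lintegral_add_right_eq_self (fun ω => ‖A ω‖ₑ ^ (2:ℝ)) _
  · simp_rw [add_sub_assoc]
    exact lintegral_add_right_eq_self (fun ω => ‖B ω‖ₑ ^ (2:ℝ)) _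

noncomputable def fl {d : ℕ} (x : EE d) : Fin d → ℤ := fun i => ⌊x i⌋
noncomputable def lat {d : ℕ} (n : Fin d → ℤ) : EE d := WithLp.toLp 2 fun i => (n i : ℝ)

lemma fl_meas (d : ℕ) : Measurable (fl : (EE d) → Fin d → ℤ) := by
  unfold fl
  refine measurable_pi_lambda _ fun i => ?_
  have : Measurable fun x : EE d => x i := by fun_prop
  exact this.floor

lemma fl_cell {d : ℕ} (n : Fin d → ℤ) :
    (fun y : EE d => y + lat n) ⁻¹' (fl ⁻¹' {n}) = unitCube d := by
  ext y
  simp only [Set.mem_preimage, Set.mem_singleton_iff, unitCube, Set.mem_ofPred_eq]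
  rw [funext_iff]
  refine forall_congr' fun i => ?_
  show ⌊(y i + (n i : ℝ))⌋ = n i ↔ y i ∈ Set.Ico (0:ℝ) 1
  rw [Int.floor_add_intCast, add_eq_right, Int.floor_eq_zero_iff]

lemma lint_cells {d : ℕ} (F : (EE d) → ℝ≥0∞) :
    ∫⁻ t, F t = ∑' n : Fin d → ℤ, ∫⁻ y in unitCube d, F (y + lat n) := by
  have h1 : (⋃ n : Fin d → ℤ, (fl : (EE d) → _) ⁻¹' {n}) = Set.univ := by
    ext t; simp
  have h2 := lintegral_iUnion (μ := (volume : Measure (EE d)))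
    (s := fun n : Fin d → ℤ => (fl : (EE d) → _) ⁻¹' {n})
    (fun n => fl_meas d (measurableSet_singleton n)) (by
      intro a b hab
      rw [Function.onFun, Set.disjoint_left]
      intro t ha hb
      simp only [Set.mem_preimage, Set.mem_singleton_iff] at ha hb
      exact hab (ha.symm.trans hb)) F
  rw [h1, setLIntegral_univ] at h2
  rw [h2]
  congr 1; ext n
  rw [← fl_cell n]
  exact ((measurePreserving_add_right volume (lat n)).setLIntegral_comp_preimage_emb
    (measurableEmbedding_addRight _) F _).symm

lemma cube_vol (d : ℕ) : volume (unitCube d) = 1 := by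
  have := (EuclideanSpace.volume_preserving_symm_measurableEquiv_toLp (Fin d)).measure_preimage_equiv
    (Set.univ.pi fun _ => Set.Ico (0:ℝ) 1)
  rw [Real.volume_pi_Ico] at this
  simp only [sub_zero, ENNReal.ofReal_one, Finset.prod_const_one] at this
  rw [← this]
  congr 1
  ext x
  simp [unitCube]

noncomputable def ww {d : ℕ} (k : Fin d → ℤ) : ℝ≥0∞ :=
  ENNReal.ofReal (Real.exp (∑ i, (3 / 2 * Real.pi - Real.pi * |(k i : ℝ)|)))

lemma cell_est {d : ℕ} (p t : EE d) :
    ENNReal.ofReal (Real.exp (-Real.pi * ‖t - p‖ ^ 2)) ≤ ww (fl t - fl p) ^ 2 := by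
  unfold ww
  rw [← ENNReal.ofReal_pow (Real.exp_nonneg _)]
  apply ENNReal.ofReal_le_ofReal
  rw [← Real.exp_nat_mul, Real.exp_le_exp, EuclideanSpace.real_norm_sq_eq, Finset.mul_sum,
    Finset.mul_sum]
  refine Finset.sum_le_sum fun i _ => ?_
  simp only [PiLp.sub_apply, fl, Pi.sub_apply, Int.cast_sub, Nat.cast_ofNat]
  have a1 := Int.floor_le (t i)
  have a2 := Int.lt_floor_add_one (t i)
  have b1 := Int.floor_le (p i)
  have b2 := Int.lt_floor_add_one (p i)
  have hk : |(⌊t i⌋ : ℝ) - ⌊p i⌋| ≤ |t i - p i| + 1 := by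
    rw [abs_le]
    have c1 := le_abs_self (t i - p i)
    have c2 := neg_abs_le (t i - p i)
    constructor <;> linarith
  have hs : (t i - p i) ^ 2 = |t i - p i| ^ 2 := (sq_abs _).symm
  have : 2 * |(⌊t i⌋ : ℝ) - ⌊p i⌋| - 3 ≤ (t i - p i) ^ 2 := by
    rw [hs]; nlinarith [sq_nonneg (|t i - p i| - 1)]
  nlinarith [Real.pi_pos]

noncomputable def gn {d : ℕ} (g : (EE d) → ℂ) (n : Fin d → ℤ) : ℝ≥0∞ :=
  (∫⁻ y in unitCube d, ‖g (y + lat n)‖ₑ ^ 2) ^ (1 / 2 : ℝ)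

lemma fl_add_lat {d : ℕ} (y : EE d) (n : Fin d → ℤ) (hy : y ∈ unitCube d) : fl (y + lat n) = n := by
  have : y ∈ (fun y : EE d => y + lat n) ⁻¹' (fl ⁻¹' {n}) := by rw [fl_cell]; exact hy
  exact this

lemma cube_meas (d : ℕ) : MeasurableSet (unitCube d) := by
  rw [← fl_cell (0 : Fin d → ℤ)]
  exact (measurable_id.add_const _) (fl_meas d (measurableSet_singleton _))

lemma MM_le {d : ℕ} (g : (EE d) → ℂ) (p : EE d) :
    MM g p ≤ ∑' k : Fin d → ℤ, ww k * gn g (fl p + k) := by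
  have h1 : ∫⁻ t, ENNReal.ofReal (Real.exp (-Real.pi * ‖t - p‖ ^ 2)) * ‖g t‖ₑ ^ 2 ≤
      ∑' n : Fin d → ℤ, (ww (n - fl p) * gn g n) ^ 2 := by
    rw [lint_cells]
    refine ENNReal.tsum_le_tsum fun n => ?_
    have h2 : gn g n ^ 2 = ∫⁻ y in unitCube d, ‖g (y + lat n)‖ₑ ^ 2 := by
      unfold gn
      rw [← ENNReal.rpow_two, ← ENNReal.rpow_mul]; simp
    rw [mul_pow, h2, ← lintegral_const_mul' _ _ (by simp [ww])]
    refine setLIntegral_mono' (cube_meas d) fun y hy => ?_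
    gcongr
    have := cell_est p (y + lat n)
    rwa [fl_add_lat y n hy] at this
  have h3 : ∑' n : Fin d → ℤ, (ww (n - fl p) * gn g n) ^ 2 =
      ∑' k : Fin d → ℤ, (ww k * gn g (fl p + k)) ^ 2 := by
    rw [← (Equiv.addLeft (fl p)).tsum_eq]
    simp
  rw [h3] at h1
  have h4 : ∀ a : (Fin d → ℤ) → ℝ≥0∞, ∑' k, a k ^ 2 ≤ (∑' k, a k) ^ 2 := by
    intro a
    rw [sq (∑' k, a k), ← ENNReal.tsum_mul_right]
    refine ENNReal.tsum_le_tsum fun k => ?_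
    rw [sq]
    gcongr
    exact ENNReal.le_tsum k
  unfold MM
  refine (ENNReal.rpow_le_rpow (h1.trans (h4 _)) (by norm_num)).trans (le_of_eq ?_)
  rw [← ENNReal.rpow_two, ← ENNReal.rpow_mul]; simp

lemma ww_sum (d : ℕ) : ∑' k : Fin d → ℤ, ww k ≠ ∞ := by
  set W : ℤ → ℝ≥0∞ := fun k => ENNReal.ofReal (Real.exp (3 / 2 * Real.pi - Real.pi * |(k : ℝ)|))
  have hW : ∑' k, W k ≠ ∞ := by
    apply Summable.tsum_ofReal_ne_top
    have hn : Summable fun n : ℕ => Real.exp (3 / 2 * Real.pi - Real.pi * n) := by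
      have : ∀ n : ℕ, Real.exp (3 / 2 * Real.pi - Real.pi * n) =
          Real.exp (3 / 2 * Real.pi) * (Real.exp (-Real.pi)) ^ n := by
        intro n
        rw [← Real.exp_nat_mul, ← Real.exp_add]; congr 1; ring
      simp_rw [this]
      apply Summable.mul_left
      apply summable_geometric_of_lt_one (Real.exp_nonneg _)
      rw [Real.exp_lt_one_iff]; linarith [Real.pi_pos]
    apply Summable.of_nat_of_neg <;> simpa using hn
  have hp : ∀ d : ℕ, ∑' k : Fin d → ℤ, ∏ i, W (k i) = (∑' k, W k) ^ d := by
    intro d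
    induction d with
    | zero => simp
    | succ n ih =>
      rw [← (Fin.consEquiv (fun _ : Fin (n+1) => ℤ)).tsum_eq, ENNReal.tsum_prod']
      simp only [Fin.consEquiv_apply, Fin.prod_univ_succ, Fin.cons_zero, Fin.cons_succ]
      simp_rw [ENNReal.tsum_mul_left, ih, ENNReal.tsum_mul_right]
      rw [pow_succ']
  have : ∀ k : Fin d → ℤ, ww k = ∏ i, W (k i) := by
    intro k
    rw [ww, Real.exp_sum, ENNReal.ofReal_prod_of_nonneg]
    exact fun i _ => Real.exp_nonneg _
  simp_rw [this, hp]
  exact ENNReal.pow_ne_top hW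


lemma lq_transfer {d : ℕ} (A : (Fin d → ℤ) → ℝ≥0∞) (p : ℝ≥0∞) (c : EE d) (k : Fin d → ℤ) :
    lqNorm volume p (fun x : EE d => A (fl (x + c) + k)) ≤ lqNorm Measure.count p A := by
  unfold lqNorm
  split_ifs with hp
  · have h0 : ∀ n, A n ≤ essSup A Measure.count := by
      have := ENNReal.ae_le_essSup (μ := Measure.count) A
      intro n
      have h2 : ∀ᵐ n ∂(Measure.count : Measure (Fin d → ℤ)), A n ≤ essSup A Measure.count := this
      rw [Measure.ae_count_iff] at h2
      exact h2 n
    exact essSup_le_of_ae_le _ (Filter.Eventually.of_forall fun x => h0 _)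
  · apply ENNReal.rpow_le_rpow _ (by positivity)
    rw [lintegral_add_right_eq_self (fun x : EE d => A (fl x + k) ^ p.toReal) c, lint_cells,
      lintegral_count, ← (Equiv.addRight k).tsum_eq (fun n => A n ^ p.toReal)]
    refine ENNReal.tsum_le_tsum fun n => ?_
    refine (setLIntegral_mono' (g := fun _ => A (n + k) ^ p.toReal) (cube_meas d) fun y hy => ?_).trans ?_
    · rw [fl_add_lat y n hy]
    · rw [setLIntegral_const, cube_vol, mul_one]
      exact le_rfl

lemma lq_holder {α : Type*} [MeasurableSpace α] (μ : Measure α) (s : ℝ≥0∞) (hs : 1 ≤ s)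
    (U V : α → ℝ≥0∞) (hU : Measurable U) (hV : Measurable V) :
    ∫⁻ x, U x * V x ∂μ ≤ lqNorm μ (dualExp s) U * lqNorm μ s V := by
  by_cases h1 : s = 1
  · subst h1
    simp only [lqNorm, dualExp, if_true, ENNReal.one_ne_top, if_false, ENNReal.toReal_one,
      ENNReal.rpow_one, div_one]
    rw [← lintegral_const_mul _ hV]
    refine lintegral_mono_ae ?_
    filter_upwards [ENNReal.ae_le_essSup (μ := μ) U] with x hx
    gcongr
  by_cases h2 : s = ∞
  · subst h2
    simp only [lqNorm, dualExp, if_true, ENNReal.one_ne_top, if_false, ENNReal.toReal_one,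
      ENNReal.rpow_one, div_one, h1]
    rw [← lintegral_mul_const _ hU]
    refine lintegral_mono_ae ?_
    filter_upwards [ENNReal.ae_le_essSup (μ := μ) V] with x hx
    gcongr
  have hs1 : 1 < s.toReal := by
    rw [← ENNReal.toReal_one]
    exact (ENNReal.toReal_lt_toReal (by simp) h2).2 (lt_of_le_of_ne hs (Ne.symm h1))
  have hc : (s.toReal / (s.toReal - 1)).HolderConjugate s.toReal :=
    (Real.HolderConjugate.conjExponent hs1).symm
  simp only [lqNorm, dualExp, h1, h2, if_false, ENNReal.ofReal_ne_top]
  rw [ENNReal.toReal_ofReal hc.nonneg]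
  exact ENNReal.lintegral_mul_le_Lp_mul_Lq μ hc hU.aemeasurable hV.aemeasurable

lemma conv_bound {d : ℕ} (s : ℝ≥0∞) (hs : 1 ≤ s) (f g : (EE d) → ℂ) (a : EE d) :
    ∫⁻ x : EE d, MM g (x - a) * MM f (x + a) ≤
      ((∑' k : Fin d → ℤ, ww k) * (∑' k : Fin d → ℤ, ww k)) *
        (lqNorm Measure.count (dualExp s) (gn g) * lqNorm Measure.count s (gn f)) := by
  have hm : ∀ (A : (Fin d → ℤ) → ℝ≥0∞) (c : EE d) (k : Fin d → ℤ),
      Measurable fun x : EE d => A (fl (x + c) + k) := by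
    intro A c k
    have h1 : Measurable fun n : Fin d → ℤ => A (n + k) := measurable_of_countable _
    exact h1.comp ((fl_meas d).comp (measurable_id.add_const c))
  calc ∫⁻ x : EE d, MM g (x - a) * MM f (x + a)
      ≤ ∫⁻ x : EE d, ∑' k : Fin d → ℤ, ∑' l : Fin d → ℤ,
          (ww k * ww l) * (gn g (fl (x + -a) + k) * gn f (fl (x + a) + l)) := by
        refine lintegral_mono fun x => ?_
        refine (mul_le_mul' (MM_le g _) (MM_le f _)).trans (le_of_eq ?_)
        rw [← ENNReal.tsum_mul_right]
        congr 1; ext k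
        rw [← ENNReal.tsum_mul_left]
        congr 1; ext l
        rw [sub_eq_add_neg]; ring
    _ = ∑' k : Fin d → ℤ, ∑' l : Fin d → ℤ,
          (ww k * ww l) * ∫⁻ x : EE d, (gn g (fl (x + -a) + k) * gn f (fl (x + a) + l)) := by
        have hkl : ∀ k l : Fin d → ℤ, Measurable fun x : EE d =>
            gn g (fl (x + -a) + k) * gn f (fl (x + a) + l) := fun k l =>
          (hm (gn g) (-a) k).mul (hm (gn f) a l)
        rw [lintegral_tsum fun k =>
          (Measurable.tsum fun l => (hkl k l).const_mul _).aemeasurable]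
        congr 1; ext k
        rw [lintegral_tsum fun l => ((hkl k l).const_mul _).aemeasurable]
        congr 1; ext l
        rw [lintegral_const_mul _ (hkl k l)]
    _ ≤ ∑' k : Fin d → ℤ, ∑' l : Fin d → ℤ,
          (ww k * ww l) * 
            (lqNorm Measure.count (dualExp s) (gn g) * lqNorm Measure.count s (gn f)) := by
        refine ENNReal.tsum_le_tsum fun k => ENNReal.tsum_le_tsum fun l => ?_
        gcongr
        refine (lq_holder volume s hs _ _ (hm (gn g) (-a) k) (hm (gn f) a l)).trans ?_
        exact mul_le_mul' (lq_transfer _ _ _ _) (lq_transfer _ _ _ _)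
    _ = _ := by
        simp_rw [ENNReal.tsum_mul_right, ENNReal.tsum_mul_left, ENNReal.tsum_mul_right]

lemma wNorm_eq {d : ℕ} (s : ℝ≥0∞) (f : (EE d) → ℂ) :
    wNorm d 2 s f = lqNorm Measure.count s (gn f) := by
  unfold wNorm
  congr 1
  ext n
  simp only [lqNorm, gn, ENNReal.ofNat_ne_top, if_false, ENNReal.toReal_ofNat, ENNReal.rpow_two]
  rfl

end helpers

/-- `‖W(g,f)‖_{M^{1,∞}} ≲ ‖f‖_{W(L²,L^s)} ‖g‖_{W(L²,L^{s'})}`. -/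
theorem wigner_M1inf_bound (d : ℕ) (s : ℝ≥0∞) (hs : 1 ≤ s) :
    ∃ C : ℝ, 0 < C ∧
      ∀ f g : SchwartzMap (EuclideanSpace ℝ (Fin d)) ℂ,
        modNorm 1 ∞ (wigner ⇑g ⇑f) ≤
          ENNReal.ofReal C * wNorm d 2 s ⇑f * wNorm d 2 (dualExp s) ⇑g := by
  set K : ℝ≥0∞ := (∫⁻ η : EE d, ‖kap η‖ₑ) *
    ((∑' k : Fin d → ℤ, ww k) * (∑' k : Fin d → ℤ, ww k)) with hK
  have hKt : K ≠ ∞ :=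
    ENNReal.mul_ne_top (kap_int d).2.ne (ENNReal.mul_ne_top (ww_sum d) (ww_sum d))
  refine ⟨K.toReal + 1, by positivity, fun f g => ?_⟩
  have hKC : K ≤ ENNReal.ofReal (K.toReal + 1) := by
    conv_lhs => rw [← ENNReal.ofReal_toReal hKt]
    exact ENNReal.ofReal_le_ofReal (by linarith)
  have key : modNorm 1 ∞ (wigner ⇑g ⇑f) ≤ K * (wNorm d 2 (dualExp s) ⇑g * wNorm d 2 s ⇑f) := by
    unfold modNorm
    rw [lqNorm, if_pos rfl]
    refine essSup_le_of_ae_le _ (Filter.Eventually.of_forall fun ζ => ?_)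
    simp only [lqNorm, ENNReal.one_ne_top, if_false, ENNReal.toReal_one, ENNReal.rpow_one, div_one]
    refine (M_bound f g ζ).trans ?_
    rw [wNorm_eq, wNorm_eq, hK, mul_assoc]
    gcongr
    exact conv_bound s hs f g _
  refine key.trans ?_
  rw [mul_comm (wNorm d 2 (dualExp s) ⇑g), ← mul_assoc]
  gcongr
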